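/- Let $S_4$ be the symmetric group acting on $\{1,2,3,4\}$, with product $(\pi\rho)(i)=\pi(\rho(i))$. A permutation $\sigma\in S_4$ has a descent at $i\in\{1,2,3\}$ if $\sigma(i)>\sigma(i+1)$, and its recoil set $R(\sigma)\subseteq\{1,2,3\}$ is the set of descents of $\sigma^{-1}$. For $I\subseteq\{1,2,3\}$ let $Y_I=\sum_{R(\sigma)=I}\sigma$ in the rational group algebra $\mathbb{Q}[S_4]$. Then $$Y_{\{2\}}\,Y_{\{1\}}=Y_{\emptyset}+Y_{\{2\}}+Y_{\{3\}}+Y_{\{2,3\}}+Y_{\{1,2\}}$$ and $$Y_{\{2\}}\,Y_{\{3\}}=Y_{\emptyset}+Y_{\{2\}}+Y_{\{1\}}+Y_{\{2,3\}}+Y_{\{1,2\}}.$$ -/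

import Mathlib

/-!
The symmetric group on `{1, …, n + 1}` is `Equiv.Perm (Fin (n + 1))`, the letter `k` of the
ordered set `{1, …, n + 1}` being the element `k - 1` of `Fin (n + 1)`.  Descent and recoil
positions are recorded with their usual values `1, …, n`, as natural numbers.  The product of
permutations is composition, `(π * ρ) i = π (ρ i)`.
-/

/-- The descent set of a permutation: the positions `k ∈ {1, …, n}` at which the `k`-th letter
of the word of `σ` is larger than the next one.  The index `i : Fin n` stands for the
position `k = i + 1`, whose letter is `σ i.castSucc`, followed by `σ i.succ`. -/
def descentSet {n : ℕ} (σ : Equiv.Perm (Fin (n + 1))) : Finset ℕ :=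
  (Finset.univ.filter fun i : Fin n => σ i.castSucc > σ i.succ).image fun i : Fin n => (i : ℕ) + 1

/-- The recoil set of a permutation: the descent set of its inverse. -/
def recoilSet {n : ℕ} (σ : Equiv.Perm (Fin (n + 1))) : Finset ℕ :=
  descentSet σ⁻¹

/-- `recoilSum n I` is `Y_I`: the sum, in the rational group algebra of the symmetric group on
`n + 1` letters, of all permutations with recoil set `I`. -/
noncomputable def recoilSum (n : ℕ) (I : Finset ℕ) :
    MonoidAlgebra ℚ (Equiv.Perm (Fin (n + 1))) :=
  ∑ σ ∈ Finset.univ.filter (fun σ : Equiv.Perm (Fin (n + 1)) => recoilSet σ = I),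
    MonoidAlgebra.of ℚ (Equiv.Perm (Fin (n + 1))) σ

/-- `Y I` is `Y_I` in `ℚ[S_4]`. -/
noncomputable abbrev Y (I : Finset ℕ) : MonoidAlgebra ℚ (Equiv.Perm (Fin 4)) :=
  recoilSum 3 I

/-!
Write `X_K` for the sum of the permutations with recoil set contained in `K`.  The permutations
in `X_{1}` are the cycles `c_j` sending `j` to the smallest letter and preserving the order of the
other letters, so the coefficient of `g` in `X_K X_{1}` is the number of `j` for which the
descents of `c_j g⁻¹` lie in `K`.  For `j = g⁻¹ k`, the word `c_j g⁻¹` is that of `g⁻¹` with the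
letter in position `k` (counted from `0`) made the smallest: it has a descent just before that
letter, none just after it, and is otherwise unchanged up to order.  Hence
`X_K X_{1} = ∑_{k ∈ {0} ∪ K} X_{K ∪ {k + 1}}`, and passing from `X` to `Y` gives the first
identity.  Conjugation by the order-reversing permutation replaces each recoil set `I` by
`n + 1 - I` and turns the first identity into the second.
-/

section

variable {n : ℕ}

open Equiv

theorem succ_mem_descentSet_iff {σ : Perm (Fin (n + 1))} {i : Fin n} :
    (i : ℕ) + 1 ∈ descentSet σ ↔ σ i.succ < σ i.castSucc := by
  simp [descentSet, Fin.val_inj]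

theorem descentSet_subset_iff {σ : Perm (Fin (n + 1))} {K : Finset ℕ} :
    descentSet σ ⊆ K ↔ ∀ i : Fin n, σ i.succ < σ i.castSucc → (i : ℕ) + 1 ∈ K := by
  simp [descentSet, Finset.image_subset_iff]

theorem descentSet_eq_empty_iff {σ : Perm (Fin (n + 1))} : descentSet σ = ∅ ↔ σ = 1 := by
  constructor
  · intro h
    have hmono : StrictMono σ := Fin.strictMono_iff_lt_succ.2 fun i => by
      have hi : ¬ σ i.succ < σ i.castSucc := by
        simp [← succ_mem_descentSet_iff, h]
      exact lt_of_le_of_ne (not_lt.1 hi) (σ.injective.ne i.castSucc_lt_succ.ne)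
    have hrefl : hmono.orderIsoOfSurjective σ σ.surjective = OrderIso.refl _ :=
      Subsingleton.elim _ _
    exact Equiv.ext fun i => DFunLike.congr_fun hrefl i
  · rintro rfl
    simp [descentSet, Fin.castSucc_lt_succ.le]

theorem cycleRange_lt_cycleRange_iff {j a b : Fin (n + 1)} (ha : a ≠ j) (hb : b ≠ j) :
    j.cycleRange a < j.cycleRange b ↔ a < b := by
  obtain ⟨a, rfl⟩ := Fin.exists_succAbove_eq ha
  obtain ⟨b, rfl⟩ := Fin.exists_succAbove_eq hb
  simp only [Fin.cycleRange_succAbove, Fin.succ_lt_succ_iff, Fin.succAbove_lt_succAbove_iff]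

theorem cycleRange_mul_succ_lt_castSucc_iff (w : Perm (Fin (n + 1))) (k : Fin (n + 1)) (i : Fin n) :
    ((w k).cycleRange * w) i.succ < ((w k).cycleRange * w) i.castSucc ↔
      i.succ = k ∨ i.castSucc ≠ k ∧ w i.succ < w i.castSucc := by
  simp only [Perm.mul_apply]
  by_cases hsucc : i.succ = k
  · have hcast : w i.castSucc ≠ w k := w.injective.ne (hsucc ▸ i.castSucc_lt_succ.ne)
    have hpos : 0 < (w k).cycleRange (w i.castSucc) := by
      rw [Fin.pos_iff_ne_zero, ← Fin.cycleRange_self (w k)]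
      exact (w k).cycleRange.injective.ne hcast
    simpa [hsucc] using hpos
  by_cases hcast : i.castSucc = k
  · simp [hsucc, hcast]
  · simp [hsucc, hcast, cycleRange_lt_cycleRange_iff]

theorem descentSet_cycleRange_mul_subset_iff (w : Perm (Fin (n + 1))) (k : Fin (n + 1))
    (K : Finset ℕ) :
    descentSet ((w k).cycleRange * w) ⊆ K ↔
      (k : ℕ) ∈ insert 0 K ∧ descentSet w ⊆ insert ((k : ℕ) + 1) K := by
  simp only [descentSet_subset_iff, cycleRange_mul_succ_lt_castSucc_iff, Finset.mem_insert]
  constructor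
  · intro h
    refine ⟨?_, fun i hi => ?_⟩
    · rcases k.eq_zero_or_eq_succ with rfl | ⟨i, rfl⟩
      · exact Or.inl rfl
      · exact Or.inr (h i (Or.inl rfl))
    · by_cases hik : i.castSucc = k
      · exact Or.inl (by rw [← hik, Fin.val_castSucc])
      · exact Or.inr (h i (Or.inr ⟨hik, hi⟩))
  · rintro ⟨hk, h⟩ i (rfl | ⟨hik, hi⟩)
    · simpa using hk
    · refine (h i hi).resolve_left fun hval => hik (Fin.ext ?_)
      simpa using hval

theorem recoilSet_mul_inv_cycleRange_subset_iff (g : Perm (Fin (n + 1))) (k : Fin (n + 1))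
    (K : Finset ℕ) :
    recoilSet (g * (g⁻¹ k).cycleRange⁻¹) ⊆ K ↔
      (k : ℕ) ∈ insert 0 K ∧ recoilSet g ⊆ insert ((k : ℕ) + 1) K := by
  simp only [recoilSet, mul_inv_rev, inv_inv, descentSet_cycleRange_mul_subset_iff]

theorem recoilSet_eq_empty_iff {σ : Perm (Fin (n + 1))} : recoilSet σ = ∅ ↔ σ = 1 := by
  rw [recoilSet, descentSet_eq_empty_iff, inv_eq_one]

theorem recoilSet_subset_singleton_one_iff {τ : Perm (Fin (n + 1))} :
    recoilSet τ ⊆ {1} ↔ (τ⁻¹ 0).cycleRange = τ := by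
  have h := recoilSet_mul_inv_cycleRange_subset_iff τ 0 ∅
  rw [Finset.subset_empty, recoilSet_eq_empty_iff, mul_inv_eq_one, eq_comm] at h
  simpa using h.symm

/-- The sum `X_K = ∑_{I ⊆ K} Y_I` of the permutations whose recoil set is contained in `K`.  These
sums form the other standard basis of the descent algebra, in which products are easier to compute
than in the basis `Y_I`. -/
noncomputable def recoilSubsetSum (n : ℕ) (K : Finset ℕ) :
    MonoidAlgebra ℚ (Perm (Fin (n + 1))) :=
  ∑ σ : Perm (Fin (n + 1)) with recoilSet σ ⊆ K, MonoidAlgebra.of ℚ _ σ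

theorem coeff_recoilSubsetSum (K : Finset ℕ) (g : Perm (Fin (n + 1))) :
    (recoilSubsetSum n K).coeff g = if recoilSet g ⊆ K then 1 else 0 := by
  simp [recoilSubsetSum, Finsupp.single_apply]

theorem recoilSubsetSum_singleton_one :
    recoilSubsetSum n {1} = ∑ j : Fin (n + 1), MonoidAlgebra.of ℚ _ j.cycleRange := by
  have inv_cycleRange_zero (j : Fin (n + 1)) : j.cycleRange⁻¹ 0 = j := j.cycleRange_symm_zero
  refine Finset.sum_bij' (fun τ _ => τ⁻¹ 0) (fun j _ => j.cycleRange) (fun _ _ => Finset.mem_univ _)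
    (fun j _ => ?_) (fun τ hτ => ?_) (fun j _ => inv_cycleRange_zero j) (fun τ hτ => ?_)
  · rw [Finset.mem_filter_univ, recoilSet_subset_singleton_one_iff, inv_cycleRange_zero]
  · exact recoilSet_subset_singleton_one_iff.1 (Finset.mem_filter_univ τ |>.1 hτ)
  · rw [recoilSet_subset_singleton_one_iff.1 (Finset.mem_filter_univ τ |>.1 hτ)]

theorem recoilSubsetSum_mul_singleton_one (K : Finset ℕ) :
    recoilSubsetSum n K * recoilSubsetSum n {1} =
      ∑ k ∈ {k : Fin (n + 1) | (k : ℕ) ∈ insert 0 K},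
        recoilSubsetSum n (insert ((k : ℕ) + 1) K) := by
  ext g
  calc (recoilSubsetSum n K * recoilSubsetSum n {1}).coeff g
      = ∑ j : Fin (n + 1), if recoilSet (g * j.cycleRange⁻¹) ⊆ K then 1 else 0 := by
        simp [recoilSubsetSum_singleton_one, Finset.mul_sum, coeff_recoilSubsetSum]
    _ = ∑ k : Fin (n + 1), if recoilSet (g * (g⁻¹ k).cycleRange⁻¹) ⊆ K then 1 else 0 :=
        (Equiv.sum_comp g⁻¹ _).symm
    _ = _ := by
        simp only [recoilSet_mul_inv_cycleRange_subset_iff, ite_and, ← Finset.sum_filter,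
          MonoidAlgebra.coeff_sum, Finsupp.finsetSum_apply, coeff_recoilSubsetSum]

theorem recoilSubsetSum_singleton_mul_singleton_one {k : ℕ} (hk : 0 < k) (hkn : k ≤ n) :
    recoilSubsetSum n {k} * recoilSubsetSum n {1} =
      recoilSubsetSum n {1, k} + recoilSubsetSum n {k, k + 1} := by
  have hfilter : ({i : Fin (n + 1) | (i : ℕ) ∈ insert 0 ({k} : Finset ℕ)} : Finset _) =
      {0, ⟨k, Nat.lt_succ_of_le hkn⟩} := by
    ext i
    simp only [Finset.mem_filter_univ, Finset.mem_insert, Finset.mem_singleton, Fin.ext_iff,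
      Fin.val_zero]
  have hne : (0 : Fin (n + 1)) ≠ ⟨k, Nat.lt_succ_of_le hkn⟩ := by simp [Fin.ext_iff, hk.ne]
  rw [recoilSubsetSum_mul_singleton_one, hfilter, Finset.sum_pair hne]
  simp only [Fin.val_zero, zero_add, Finset.pair_comm (k + 1)]

theorem recoilSubsetSum_eq_sum_powerset (K : Finset ℕ) :
    recoilSubsetSum n K = ∑ I ∈ K.powerset, recoilSum n I := by
  rw [recoilSubsetSum, ← Finset.sum_fiberwise_of_maps_to (g := recoilSet) (t := K.powerset)
    fun σ hσ => by simpa using hσ]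
  refine Finset.sum_congr rfl fun I hI => ?_
  rw [recoilSum, Finset.filter_filter]
  refine Finset.sum_congr (Finset.filter_congr fun σ _ => ?_) fun _ _ => rfl
  exact and_iff_right_of_imp fun h => h ▸ Finset.mem_powerset.1 hI

theorem recoilSubsetSum_singleton (a : ℕ) :
    recoilSubsetSum n {a} = recoilSum n ∅ + recoilSum n {a} := by
  rw [recoilSubsetSum_eq_sum_powerset, ← Finset.insert_empty, Finset.sum_powerset_insert (by simp),
    Finset.powerset_empty, Finset.sum_singleton, Finset.sum_singleton]

theorem recoilSubsetSum_pair {a b : ℕ} (hab : a ≠ b) :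
    recoilSubsetSum n {a, b} =
      recoilSum n ∅ + recoilSum n {a} + recoilSum n {b} + recoilSum n {a, b} := by
  rw [recoilSubsetSum_eq_sum_powerset, Finset.sum_powerset_insert (by simpa using hab),
    ← recoilSubsetSum_eq_sum_powerset, recoilSubsetSum_singleton, ← Finset.insert_empty (a := b),
    Finset.sum_powerset_insert (by simp), Finset.powerset_empty, Finset.sum_singleton,
    Finset.sum_singleton, Finset.insert_empty, Finset.insert_empty]
  abel

theorem recoilSum_empty : recoilSum n ∅ = 1 := by
  simp [recoilSum, recoilSet_eq_empty_iff, Finset.filter_eq', MonoidAlgebra.one_def]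

theorem recoilSum_singleton_mul_singleton_one {k : ℕ} (hk : 1 < k) (hkn : k ≤ n) :
    recoilSum n {k} * recoilSum n {1} =
      recoilSum n ∅ + recoilSum n {k} + recoilSum n {k + 1} + recoilSum n {k, k + 1} +
        recoilSum n {1, k} := by
  have hsub (a : ℕ) : recoilSum n {a} = recoilSubsetSum n {a} - 1 := by
    rw [recoilSubsetSum_singleton, recoilSum_empty, add_sub_cancel_left]
  calc recoilSum n {k} * recoilSum n {1}
      = recoilSubsetSum n {k} * recoilSubsetSum n {1} - recoilSubsetSum n {k}
          - recoilSubsetSum n {1} + 1 := by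
        rw [hsub, hsub]
        noncomm_ring
    _ = recoilSubsetSum n {1, k} + recoilSubsetSum n {k, k + 1} - recoilSubsetSum n {k}
          - recoilSubsetSum n {1} + 1 := by
        rw [recoilSubsetSum_singleton_mul_singleton_one (by lia) hkn]
    _ = _ := by
        simp only [recoilSubsetSum_pair hk.ne, recoilSubsetSum_pair k.lt_succ_self.ne,
          recoilSubsetSum_singleton, recoilSum_empty]
        abel

theorem conj_revPerm_rev_succ_lt_castSucc_iff (σ : Perm (Fin (n + 1))) (i : Fin n) :
    MulAut.conj Fin.revPerm σ i.rev.succ < MulAut.conj Fin.revPerm σ i.rev.castSucc ↔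
      σ i.succ < σ i.castSucc := by
  simp [Perm.inv_def, Fin.rev_succ, Fin.rev_castSucc]

theorem descentSet_conj_revPerm (σ : Perm (Fin (n + 1))) :
    descentSet (MulAut.conj Fin.revPerm σ) = (descentSet σ).image (n + 1 - ·) := by
  have hrev (i : Fin n) : (i.rev : ℕ) + 1 = n + 1 - (i + 1) := by
    rw [Fin.val_rev]
    lia
  ext m
  simp only [descentSet, Finset.mem_image, Finset.mem_filter_univ, exists_exists_and_eq_and]
  rw [← Fin.revPerm.exists_congr_right]
  simp only [gt_iff_lt, Fin.revPerm_apply, conj_revPerm_rev_succ_lt_castSucc_iff, hrev]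

theorem recoilSet_conj_revPerm (σ : Perm (Fin (n + 1))) :
    recoilSet (MulAut.conj Fin.revPerm σ) = (recoilSet σ).image (n + 1 - ·) := by
  rw [recoilSet, ← map_inv, descentSet_conj_revPerm, recoilSet]

theorem recoilSet_subset_Iic (σ : Perm (Fin (n + 1))) :
    recoilSet σ ⊆ Finset.Iic (n + 1) :=
  descentSet_subset_iff.2 fun i _ => Finset.mem_Iic.2 (by lia)

theorem recoilSet_conj_revPerm_eq_image_iff {I : Finset ℕ} (hI : I ⊆ Finset.Iic (n + 1))
    (σ : Perm (Fin (n + 1))) :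
    recoilSet (MulAut.conj Fin.revPerm σ) = I.image (n + 1 - ·) ↔ recoilSet σ = I := by
  have hinj : Set.InjOn (n + 1 - ·) (Finset.Iic (n + 1) : Set ℕ) := fun a ha b hb hab => by
    simp only [Finset.mem_coe, Finset.mem_Iic] at ha hb hab
    lia
  rw [recoilSet_conj_revPerm]
  exact (Finset.image_injOn_powerset_of_injOn hinj).eq_iff
    (Finset.mem_coe.2 (Finset.mem_powerset.2 (recoilSet_subset_Iic σ)))
    (Finset.mem_coe.2 (Finset.mem_powerset.2 hI))

theorem domCongr_conj_revPerm_recoilSum {I : Finset ℕ} (hI : I ⊆ Finset.Iic (n + 1)) :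
    MonoidAlgebra.domCongr ℚ ℚ (MulAut.conj Fin.revPerm) (recoilSum n I) =
      recoilSum n (I.image (n + 1 - ·)) := by
  rw [recoilSum, map_sum, recoilSum]
  refine Finset.sum_equiv (MulAut.conj Fin.revPerm).toEquiv (fun σ => ?_) fun σ _ => ?_
  · simpa using (recoilSet_conj_revPerm_eq_image_iff hI σ).symm
  · simp [MonoidAlgebra.domCongr_single]

theorem recoilSum_singleton_mul_singleton_last {k : ℕ} (hk : 0 < k) (hkn : k < n) :
    recoilSum n {k} * recoilSum n {n} =
      recoilSum n ∅ + recoilSum n {k} + recoilSum n {k - 1} + recoilSum n {k, n} +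
        recoilSum n {k - 1, k} := by
  have h := congrArg (MonoidAlgebra.domCongr ℚ ℚ (MulAut.conj (Fin.revPerm (n := n + 1))))
    (recoilSum_singleton_mul_singleton_one (n := n) (k := n + 1 - k) (by lia) (by lia))
  simp only [map_mul, map_add] at h
  repeat rw [domCongr_conj_revPerm_recoilSum (by grind)] at h
  simp only [Finset.image_insert, Finset.image_singleton, Finset.image_empty] at h
  rw [show n + 1 - (n + 1 - k) = k by lia, show n + 1 - (n + 1 - k + 1) = k - 1 by lia,
    Nat.add_sub_cancel, Finset.pair_comm k, Finset.pair_comm n] at h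
  rw [h]
  abel

end

theorem statement15_general {n k : ℕ} (hk : 1 < k) (hkn : k < n) :
    recoilSum n {k} * recoilSum n {1} =
        recoilSum n ∅ + recoilSum n {k} + recoilSum n {k + 1} + recoilSum n {k, k + 1} +
          recoilSum n {1, k} ∧
      recoilSum n {k} * recoilSum n {n} =
        recoilSum n ∅ + recoilSum n {k} + recoilSum n {k - 1} + recoilSum n {k, n} +
          recoilSum n {k - 1, k} :=
  ⟨recoilSum_singleton_mul_singleton_one hk hkn.le,
    recoilSum_singleton_mul_singleton_last (by lia) hkn⟩

theorem statement15 :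
    Y {2} * Y {1} = Y ∅ + Y {2} + Y {3} + Y {2, 3} + Y {1, 2} ∧
      Y {2} * Y {3} = Y ∅ + Y {2} + Y {1} + Y {2, 3} + Y {1, 2} :=
  statement15_general (by norm_num) (by norm_num)
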